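/- Theorem 6.1(iv): with the notation of the context, Σ_α 𝒳_{e_α}² = n·𝒳_e² and Σ_α 𝒴_{e_α}² = n·𝒴_e². -/

import Mathlib

open Matrix
open scoped ComplexOrder

/-- The Jordan product of two complex matrices. -/
noncomputable def jordanProd {n : ℕ} (a b : Matrix (Fin n) (Fin n) ℂ) :
    Matrix (Fin n) (Fin n) ℂ :=
  (1 / 2 : ℂ) • (a * b + b * a)

/-- The Jordan triple product `{uvw} = u∘(v∘w) − v∘(u∘w) + (u∘v)∘w`. -/
noncomputable def jTriple {n : ℕ} (u v w : Matrix (Fin n) (Fin n) ℂ) :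
    Matrix (Fin n) (Fin n) ℂ :=
  jordanProd u (jordanProd v w) - jordanProd v (jordanProd u w)
    + jordanProd (jordanProd u v) w

/-- The real inner product `⟨u|v⟩ = (1/n)·Re(tr(u·v))`. -/
noncomputable def jInner {n : ℕ} (u v : Matrix (Fin n) (Fin n) ℂ) : ℝ :=
  (1 / n : ℝ) * ((u * v).trace).re

/-- `𝒴_u = ⟨u|x⟩`. -/
noncomputable def Yfun {n : ℕ} (x u : Matrix (Fin n) (Fin n) ℂ) : ℝ :=
  jInner u x

/-- `𝓛_u = ⟨u∘x|π⟩`. -/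
noncomputable def Lfun {n : ℕ} (x p u : Matrix (Fin n) (Fin n) ℂ) : ℝ :=
  jInner (jordanProd u x) p

/-- `𝓛_{u,v} = ⟨u∘(v∘x) − v∘(u∘x)|π⟩ − μ·i·tr(x·[u,v])/(2·tr x)`. -/
noncomputable def LLfun {n : ℕ} (μ : ℝ) (x p u v : Matrix (Fin n) (Fin n) ℂ) : ℝ :=
  jInner (jordanProd u (jordanProd v x) - jordanProd v (jordanProd u x)) p
    - μ * (Complex.I * (x * (u * v - v * u)).trace).re / (2 * (x.trace).re)

/-- `𝒳_u = ⟨x|{πuπ}⟩ + n·μ²·Re(tr(x·u))/(tr x)² − μ·i·tr(x·[u,π])/(tr x)`. -/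
noncomputable def Xfun {n : ℕ} (μ : ℝ) (x p u : Matrix (Fin n) (Fin n) ℂ) : ℝ :=
  jInner x (jTriple p u p) + (n : ℝ) * μ ^ 2 * ((x * u).trace).re / ((x.trace).re) ^ 2
    - μ * (Complex.I * (x * (u * p - p * u)).trace).re / (x.trace).re

/-! Cyclicity of the trace gives `𝒳_u = ⟨u | q x qᴴ⟩` with `q = π + i(nμ / tr x)`, while
`𝒴_u = ⟨u | x⟩` by definition. Both representing matrices are hermitian of rank at most one, and
such a `Z` satisfies `Z² = (tr Z) Z`. By Parseval,
`∑ α, ⟨e_α | Z⟩² = ⟨Z | Z⟩ = (tr Z)² / n = n ⟨e | Z⟩²`. -/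

section RankOne

variable {K m n : Type*} [Field K] [Fintype n]

theorem exists_eq_vecMulVec_of_rank_le_one {A : Matrix m n K} (hA : A.rank ≤ 1) :
    ∃ (a : m → K) (b : n → K), A = vecMulVec a b := by
  classical
  obtain ⟨⟨a, _⟩, ha⟩ := finrank_le_one_iff.mp hA
  choose b hb using fun j ↦ ha ⟨A.mulVecLin (Pi.single j 1), LinearMap.mem_range_self _ _⟩
  refine ⟨a, b, ?_⟩
  ext i j
  have hcol : b j * a i = A i j := by
    simpa using congrFun (congrArg Subtype.val (hb j)) i
  rw [vecMulVec_apply, mul_comm, hcol]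

theorem mul_self_eq_trace_smul_of_rank_le_one {A : Matrix n n K} (hA : A.rank ≤ 1) :
    A * A = A.trace • A := by
  obtain ⟨a, b, rfl⟩ := exists_eq_vecMulVec_of_rank_le_one hA
  rw [vecMulVec_mul_vecMulVec, trace_vecMulVec, dotProduct_comm, vecMulVec_smul]

end RankOne

theorem rank_mul_mul_le {k l m n R : Type*} [CommSemiring R] [StrongRankCondition R]
    [Fintype l] [Fintype m] [Fintype n] (A : Matrix k l R) (B : Matrix l m R) (C : Matrix m n R) :
    (A * B * C).rank ≤ B.rank :=
  (rank_mul_le_left _ _).trans (rank_mul_le_right _ _)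

theorem trace_mul_commutator {n R : Type*} [Fintype n] [CommRing R] (a b c : Matrix n n R) :
    (a * (b * c - c * b)).trace = -(b * (a * c - c * a)).trace := by
  have hcycle : (a * (b * c)).trace = (b * (c * a)).trace := by
    rw [trace_mul_comm, mul_assoc]
  have hswap : (a * (c * b)).trace = (b * (a * c)).trace := by
    rw [← mul_assoc, trace_mul_comm]
  simp only [mul_sub, trace_sub, hcycle, hswap, neg_sub]

theorem isSelfAdjoint_trace_of_isHermitian {n R : Type*} [Fintype n] [AddCommMonoid R]
    [StarAddMonoid R] {Z : Matrix n n R} (hZ : Z.IsHermitian) : IsSelfAdjoint Z.trace := by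
  rw [IsSelfAdjoint, ← trace_conjTranspose, hZ.eq]

theorem add_I_smul_one_mul_mul_conjTranspose {n : Type*} [Fintype n] [DecidableEq n]
    (s : ℝ) (x : Matrix n n ℂ) {p : Matrix n n ℂ} (hp : p.IsHermitian) :
    (p + (Complex.I * s) • 1) * x * (p + (Complex.I * s) • 1)ᴴ =
      p * x * p + (s ^ 2 : ℂ) • x + (Complex.I * s) • (x * p - p * x) := by
  have hstar : (p + (Complex.I * s) • 1)ᴴ = p - (Complex.I * s) • 1 := by
    simp [hp.eq, sub_eq_add_neg]
  have hsq : (Complex.I * s) * (Complex.I * s) = -(s ^ 2 : ℂ) := by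
    linear_combination (s : ℂ) ^ 2 * Complex.I_sq
  rw [hstar]
  simp only [add_mul, mul_sub, smul_mul_assoc, mul_smul_comm, one_mul, mul_one, smul_add,
    smul_smul, hsq]
  module

section

variable {n : ℕ}

theorem isHermitian_jordanProd {a b : Matrix (Fin n) (Fin n) ℂ}
    (ha : a.IsHermitian) (hb : b.IsHermitian) : (jordanProd a b).IsHermitian := by
  simp [jordanProd, IsHermitian, ha.eq, hb.eq, add_comm]

theorem jTriple_eq (u v w : Matrix (Fin n) (Fin n) ℂ) :
    jTriple u v w = (1 / 2 : ℂ) • (u * v * w + w * v * u) := by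
  simp only [jTriple, jordanProd, mul_add, add_mul, smul_mul_assoc, mul_smul_comm, mul_assoc]
  module

theorem jTriple_self (p u : Matrix (Fin n) (Fin n) ℂ) : jTriple p u p = p * u * p := by
  rw [jTriple_eq]
  module

theorem jInner_self_of_rank_le_one {Z : Matrix (Fin n) (Fin n) ℂ} (hZ : Z.IsHermitian)
    (hrank : Z.rank ≤ 1) : jInner Z Z = n * jInner 1 Z ^ 2 := by
  have hreal : (Z.trace.re : ℂ) = Z.trace :=
    Complex.conj_eq_iff_re.mp (isSelfAdjoint_trace_of_isHermitian hZ)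
  have htrace : (Z * Z).trace.re = Z.trace.re ^ 2 := by
    rw [mul_self_eq_trace_smul_of_rank_le_one hrank, trace_smul, smul_eq_mul, ← hreal,
      ← Complex.ofReal_mul, Complex.ofReal_re, Complex.ofReal_re, sq]
  rw [jInner, jInner, htrace, one_mul]
  field_simp

theorem jInner_mul_mul_comm (x p u : Matrix (Fin n) (Fin n) ℂ) :
    jInner x (p * u * p) = jInner u (p * x * p) := by
  rw [jInner, jInner, ← mul_assoc, trace_mul_comm, ← mul_assoc, ← mul_assoc, trace_mul_comm]

section Parseval

variable {ι : Type*} [Fintype ι] {E : ι → Matrix (Fin n) (Fin n) ℂ}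
  {Z : Matrix (Fin n) (Fin n) ℂ}

theorem sum_jInner_mul_jInner (hZ : Z = ∑ α, (jInner (E α) Z : ℂ) • E α)
    (A : Matrix (Fin n) (Fin n) ℂ) :
    ∑ α, jInner (E α) Z * jInner (E α) A = jInner Z A := by
  have htrace : (Z * A).trace = ∑ α, (jInner (E α) Z : ℂ) * (E α * A).trace := by
    conv_lhs => rw [hZ]
    simp only [Finset.sum_mul, trace_sum, smul_mul_assoc, trace_smul, smul_eq_mul]
  calc ∑ α, jInner (E α) Z * jInner (E α) A
      = 1 / n * ∑ α, jInner (E α) Z * (E α * A).trace.re := by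
        rw [Finset.mul_sum]
        exact Finset.sum_congr rfl fun α _ ↦ mul_left_comm _ _ _
    _ = jInner Z A := by
        rw [jInner, htrace]
        simp only [Complex.re_sum, Complex.re_ofReal_mul]

theorem sum_jInner_sq_of_rank_le_one (hZ : Z.IsHermitian) (hrank : Z.rank ≤ 1)
    (hspan : Z = ∑ α, (jInner (E α) Z : ℂ) • E α) :
    ∑ α, jInner (E α) Z ^ 2 = n * jInner 1 Z ^ 2 := by
  rw [← jInner_self_of_rank_le_one hZ hrank, ← sum_jInner_mul_jInner hspan]
  simp only [sq]

end Parseval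

/-- The matrix `q x qᴴ`, where `q = π + i(nμ / tr x)`, that represents the linear functional
`u ↦ 𝒳_u` with respect to `⟨·|·⟩`; here `p` is `π`. As in `Xfun`, `tr x` is encoded by its real
part. -/
noncomputable def xRepr (μ : ℝ) (x p : Matrix (Fin n) (Fin n) ℂ) : Matrix (Fin n) (Fin n) ℂ :=
  (p + (Complex.I * (n * μ / x.trace.re : ℝ)) • 1) * x *
    (p + (Complex.I * (n * μ / x.trace.re : ℝ)) • 1)ᴴ

theorem isHermitian_xRepr (μ : ℝ) {x : Matrix (Fin n) (Fin n) ℂ} (hx : x.IsHermitian)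
    (p : Matrix (Fin n) (Fin n) ℂ) : (xRepr μ x p).IsHermitian :=
  isHermitian_mul_mul_conjTranspose _ hx

theorem rank_xRepr_le (μ : ℝ) (x p : Matrix (Fin n) (Fin n) ℂ) : (xRepr μ x p).rank ≤ x.rank :=
  rank_mul_mul_le _ _ _

theorem Xfun_eq_jInner_xRepr (hn : n ≠ 0) (μ : ℝ) (x u : Matrix (Fin n) (Fin n) ℂ)
    {p : Matrix (Fin n) (Fin n) ℂ} (hp : p.IsHermitian) :
    Xfun μ x p u = jInner u (xRepr μ x p) := by
  have hn' : (n : ℝ) ≠ 0 := Nat.cast_ne_zero.mpr hn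
  set s : ℝ := n * μ / x.trace.re with hs
  have hinner : jInner u (xRepr μ x p) = jInner u (p * x * p) + s ^ 2 * jInner u x
      + s / n * (Complex.I * (u * (x * p - p * x)).trace).re := by
    rw [xRepr, ← hs, add_I_smul_one_mul_mul_conjTranspose s x hp]
    simp only [jInner, mul_add, mul_smul_comm, trace_add, trace_smul, smul_eq_mul,
      Complex.add_re, mul_right_comm Complex.I, ← Complex.ofReal_pow, Complex.re_ofReal_mul,
      Complex.re_mul_ofReal]
    ring
  rw [hinner, Xfun, jTriple_self, jInner_mul_mul_comm, trace_mul_commutator, mul_neg,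
    Complex.neg_re, trace_mul_comm x u, jInner, jInner, hs]
  field_simp
  ring

theorem quadratic_relation_iv_general {ι : Type*} [Fintype ι] (μ : ℝ)
    {x p : Matrix (Fin n) (Fin n) ℂ} (hx : x.IsHermitian) (hrank : x.rank = 1)
    (hp : p.IsHermitian) (E : ι → Matrix (Fin n) (Fin n) ℂ)
    (hEspan : ∀ u : Matrix (Fin n) (Fin n) ℂ, u.IsHermitian →
      u = ∑ α, (jInner (E α) u : ℂ) • E α) :
    ∑ α, Xfun μ x p (E α) ^ 2 = n * Xfun μ x p 1 ^ 2 ∧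
      ∑ α, Yfun x (E α) ^ 2 = n * Yfun x 1 ^ 2 := by
  have hn : n ≠ 0 := by
    rintro rfl
    simp [Subsingleton.elim x 0] at hrank
  have hZ : (xRepr μ x p).IsHermitian := isHermitian_xRepr μ hx p
  simp only [Xfun_eq_jInner_xRepr hn μ x _ hp, Yfun]
  exact ⟨sum_jInner_sq_of_rank_le_one hZ ((rank_xRepr_le μ x p).trans hrank.le) (hEspan _ hZ),
    sum_jInner_sq_of_rank_le_one hx hrank.le (hEspan x hx)⟩

end

theorem quadratic_relation_iv
    (n : ℕ) (hn : 2 ≤ n) (μ : ℝ)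
    (x : Matrix (Fin n) (Fin n) ℂ)
    (hherm : x.IsHermitian) (hpsd : x.PosSemidef) (hrank : x.rank = 1)
    (p w : Matrix (Fin n) (Fin n) ℂ) (hw : w.IsHermitian) (hp : p = jordanProd x w)
    (E : Fin (n ^ 2) → Matrix (Fin n) (Fin n) ℂ)
    (hEherm : ∀ α, (E α).IsHermitian)
    (hEorth : ∀ α β, jInner (E α) (E β) = if α = β then 1 else 0)
    (hEspan : ∀ u : Matrix (Fin n) (Fin n) ℂ, u.IsHermitian →
      u = ∑ α, (jInner (E α) u : ℂ) • E α)
    :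
    (∑ α, (Xfun μ x p (E α)) ^ 2) = (n : ℝ) * (Xfun μ x p 1) ^ 2 ∧
    (∑ α, (Yfun x (E α)) ^ 2) = (n : ℝ) * (Yfun x 1) ^ 2 := by
  have hpherm : p.IsHermitian := hp ▸ isHermitian_jordanProd hherm hw
  exact quadratic_relation_iv_general μ hherm hrank hpherm E hEspan
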